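/- arXiv:2207.01477 — 2 statements merged into one kernel-verified Lean document; each statement's English description precedes it below -/
import Mathlib

section
/- Let T be the set of the eight strictly increasing 4-tuples (1,2,3,4), (1,2,5,6), (1,3,5,7), (1,4,6,7), (2,3,5,8), (2,4,6,8), (3,4,7,8), (5,6,7,8), and let M be a nonempty finite multiset of elements of T such that for every t in {1,...,8}, the total number of occurrences of t among all entries of all tuples of M equals the total number of occurrences of 9−t. Then M contains one of the following four complementary pairs of tuples: {(1,2,3,4),(5,6,7,8)}, {(1,2,5,6),(3,4,7,8)}, {(1,3,5,7),(2,4,6,8)}, or {(1,4,6,7),(2,3,5,8)}. -/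
/-!
Record a row by the vector in `ℤ⁴` whose coordinate at `t = 1, …, 4` counts the occurrences of `t`
minus those of `9 - t`. Torus-invariance of `M` says that the vectors of its elements add up to
zero. Replacing each entry `t` by `9 - t` negates this vector, and the eight rows give the vectors
`±v₁, …, ±v₄` with `v₁, …, v₄` the rows of a Hadamard matrix of order 4. Pairing the vanishing sum
with `vᵢ` kills all terms but those of `±vᵢ`, so a row and its complement occur equally often.
-/

section SumOverMultiset

variable {α A : Type*} [DecidableEq α]

theorem multiset_sum_map_eq_count_nsmul_add_count_nsmul [AddCommMonoid A] (M : Multiset α)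
    {f : α → A} {a b : α} (hab : a ≠ b) (hf : ∀ x ∈ M, x ≠ a → x ≠ b → f x = 0) :
    (M.map f).sum = M.count a • f a + M.count b • f b := by
  have hcount {x : α} (hx : x ∉ M.toFinset) : M.count x • f x = 0 := by
    rw [Multiset.count_eq_zero.mpr (mt Multiset.mem_toFinset.mpr hx), zero_nsmul]
  rw [Finset.sum_multiset_map_count]
  refine Finset.sum_eq_add a b hab (fun x hx hxab ↦ ?_) hcount hcount
  rw [hf x (Multiset.mem_toFinset.mp hx) hxab.1 hxab.2, nsmul_zero]

theorem multiset_count_eq_count_of_sum_map_eq_zero [AddCommGroup A] [IsAddTorsionFree A]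
    {M : Multiset α} {f : α → A} {a b : α} (ha : f a ≠ 0) (hneg : f b = -f a)
    (hf : ∀ x ∈ M, x ≠ a → x ≠ b → f x = 0) (hsum : (M.map f).sum = 0) :
    M.count a = M.count b := by
  obtain rfl | hab := eq_or_ne a b
  · rfl
  rw [multiset_sum_map_eq_count_nsmul_add_count_nsmul M hab hf, hneg, smul_neg,
    add_neg_eq_zero, ← natCast_zsmul (f a), ← natCast_zsmul (f a)] at hsum
  exact Nat.cast_injective (smul_left_injective ℤ ha hsum)

end SumOverMultiset

theorem dotProduct_multiset_sum {n R : Type*} [Fintype n] [NonUnitalNonAssocSemiring R]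
    (v : n → R) (s : Multiset (n → R)) : v ⬝ᵥ s.sum = (s.map (v ⬝ᵥ ·)).sum :=
  map_multiset_sum (⟨⟨(v ⬝ᵥ ·), dotProduct_zero v⟩, dotProduct_add v⟩ : (n → R) →+ R) s

/-- The eight rows that may occur in a standard Young tableau on `Spin(8)/P^{α₄}`, as increasing
lists of entries in `{1, …, 8}`. -/
def spinRows : List (List ℕ) :=
  [[1, 2, 3, 4], [1, 2, 5, 6], [1, 3, 5, 7], [1, 4, 6, 7],
    [2, 3, 5, 8], [2, 4, 6, 8], [3, 4, 7, 8], [5, 6, 7, 8]]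

/-- The complementary row, with entries `9 - t` for `t` in the given row. The order is reversed so
that increasing rows stay increasing; for a row in `spinRows` this is also the complement of its
set of entries in `{1, …, 8}`. -/
def complementaryRow (l : List ℕ) : List ℕ :=
  (l.map (9 - ·)).reverse

/-- The torus weight of a row: its coordinate at `i : Fin 4` is the number of entries `t = i + 1`
minus the number of entries `9 - t = 8 - i`. -/
def rowWeight (l : List ℕ) (i : Fin 4) : ℤ :=
  l.count (i + 1 : ℕ) - l.count (8 - i : ℕ)

theorem count_complementaryRow (l : List ℕ) {t : ℕ} (ht : t ∈ Finset.Icc 1 9) :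
    (complementaryRow l).count t = l.count (9 - t) := by
  rw [Finset.mem_Icc] at ht
  rw [complementaryRow, List.count_reverse, List.count, List.countP_map]
  refine List.countP_congr fun x _ ↦ ?_
  simp only [Function.comp_apply, beq_iff_eq]
  omega

theorem rowWeight_complementaryRow (l : List ℕ) :
    rowWeight (complementaryRow l) = -rowWeight l := by
  ext i
  have hlow : (i + 1 : ℕ) ∈ Finset.Icc 1 9 := by rw [Finset.mem_Icc]; omega
  have hhigh : (8 - i : ℕ) ∈ Finset.Icc 1 9 := by rw [Finset.mem_Icc]; omega
  have hsub : 9 - (i + 1 : ℕ) = 8 - i := by omega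
  have hsub' : 9 - (8 - i : ℕ) = i + 1 := by omega
  simp only [rowWeight, Pi.neg_apply, count_complementaryRow l hlow,
    count_complementaryRow l hhigh, hsub, hsub', neg_sub]

theorem rowWeight_dotProduct_self : ∀ p ∈ spinRows, rowWeight p ⬝ᵥ rowWeight p = 4 := by
  decide

theorem rowWeight_dotProduct_eq_zero :
    ∀ p ∈ spinRows, ∀ l ∈ spinRows, l ≠ p → l ≠ complementaryRow p →
      rowWeight p ⬝ᵥ rowWeight l = 0 := by
  decide

theorem sum_map_rowWeight_eq_zero {M : Multiset (List ℕ)}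
    (hocc : ∀ t ∈ Finset.Icc 1 4,
      (M.map (fun l ↦ l.count t)).sum = (M.map (fun l ↦ l.count (9 - t))).sum) :
    (M.map rowWeight).sum = 0 := by
  ext i
  have hi : (i + 1 : ℕ) ∈ Finset.Icc 1 4 := by rw [Finset.mem_Icc]; omega
  have hsub : 9 - (i + 1 : ℕ) = 8 - i := by omega
  have hcount := congrArg (Nat.cast : ℕ → ℤ) (hocc _ hi)
  simp only [hsub, Nat.cast_multiset_sum, Multiset.map_map, Function.comp_def] at hcount
  simp only [Pi.multiset_sum_apply, Multiset.map_map, Function.comp_def, rowWeight,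
    Multiset.sum_map_sub, hcount, sub_self, Pi.zero_apply]

theorem count_complementaryRow_eq_of_sum_rowWeight_eq_zero {M : Multiset (List ℕ)}
    (hM : ∀ l ∈ M, l ∈ spinRows) (hsum : (M.map rowWeight).sum = 0) {p : List ℕ}
    (hp : p ∈ spinRows) : M.count (complementaryRow p) = M.count p := by
  have hself := rowWeight_dotProduct_self p hp
  refine (multiset_count_eq_count_of_sum_map_eq_zero (f := fun l ↦ rowWeight p ⬝ᵥ rowWeight l)
    ?_ ?_ (fun l hl ↦ rowWeight_dotProduct_eq_zero p hp l (hM l hl)) ?_).symm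
  · rw [hself]
    norm_num
  · rw [rowWeight_complementaryRow, dotProduct_neg]
  · calc (M.map fun l ↦ rowWeight p ⬝ᵥ rowWeight l).sum
        = rowWeight p ⬝ᵥ (M.map rowWeight).sum := by
          rw [dotProduct_multiset_sum, Multiset.map_map, Function.comp_def]
      _ = 0 := by rw [hsum, dotProduct_zero]

/-- every nonempty torus-invariant multiset of rows of standard Young
tableaux on `Spin(8)/P^{α₄}` contains a complementary pair of rows, i.e. every
torus-invariant standard monomial has a degree-one factor. -/
theorem torus_invariant_multiset_contains_complementary_pair (M : Multiset (List ℕ))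
    (hne : M ≠ 0)
    (hM : ∀ l ∈ M, l ∈ ([[1,2,3,4], [1,2,5,6], [1,3,5,7], [1,4,6,7],
        [2,3,5,8], [2,4,6,8], [3,4,7,8], [5,6,7,8]] : List (List ℕ)))
    (hocc : ∀ t ∈ Finset.Icc 1 8,
        (M.map (fun l => l.count t)).sum = (M.map (fun l => l.count (9 - t))).sum) :
    ([1,2,3,4] ∈ M ∧ [5,6,7,8] ∈ M) ∨
    ([1,2,5,6] ∈ M ∧ [3,4,7,8] ∈ M) ∨
    ([1,3,5,7] ∈ M ∧ [2,4,6,8] ∈ M) ∨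
    ([1,4,6,7] ∈ M ∧ [2,3,5,8] ∈ M) := by
  have hsum : (M.map rowWeight).sum = 0 :=
    sum_map_rowWeight_eq_zero fun t ht ↦
      hocc t (Finset.Icc_subset_Icc_right (by norm_num) ht)
  obtain ⟨l, hl⟩ := Multiset.exists_mem_of_ne_zero hne
  have hcompl : complementaryRow l ∈ M := by
    rwa [← Multiset.count_pos,
      count_complementaryRow_eq_of_sum_rowWeight_eq_zero hM hsum (hM l hl), Multiset.count_pos]
  have hrow := hM l hl
  simp only [List.mem_cons, List.not_mem_nil, or_false] at hrow
  rcases hrow with rfl | rfl | rfl | rfl | rfl | rfl | rfl | rfl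
  · exact .inl ⟨hl, hcompl⟩
  · exact .inr (.inl ⟨hl, hcompl⟩)
  · exact .inr (.inr (.inl ⟨hl, hcompl⟩))
  · exact .inr (.inr (.inr ⟨hl, hcompl⟩))
  · exact .inr (.inr (.inr ⟨hcompl, hl⟩))
  · exact .inr (.inr (.inl ⟨hcompl, hl⟩))
  · exact .inr (.inl ⟨hcompl, hl⟩)
  · exact .inl ⟨hcompl, hl⟩
end

section
/- Let I be the ideal of the polynomial ring ℂ[z1,...,z10] generated by the twenty elements z1z2 − z5², z1z3 − z6², z1z4 − z7², z1z8 − z5z6, z1z9 − z5z7, z1z10 − z6z7, z2z3 − z8², z2z4 − z9², z2z6 − z5z8, z2z7 − z5z9, z2z10 − z8z9, z3z4 − z10², z3z5 − z6z8, z3z7 − z6z10, z3z9 − z8z10, z4z5 − z7z9, z4z6 − z7z10, z4z8 − z9z10, z5z10 − z6z9, z6z9 − z7z8. Then the Krull dimension of the quotient ring ℂ[z1,...,z10]/I equals 4. -/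
open MvPolynomial

/-!
The squares of the four coordinates on affine space are among the ten coordinates of the Veronese
cone, and they are algebraically independent. Since the square of each coordinate of the cone is a
product of two of these four, the coordinate ring of the cone is integral over a polynomial ring in
four variables, and integral extensions preserve the Krull dimension.
-/

theorem ringKrullDim_le_of_hasGoingUp {R S : Type*} [CommRing R] [CommRing S] [Algebra R S]
    [Algebra.HasGoingUp R S]
    (hsurj : Function.Surjective (PrimeSpectrum.comap (algebraMap R S))) :
    ringKrullDim R ≤ ringKrullDim S := by
  refine iSup_le fun l ↦ ?_
  obtain ⟨P, hP⟩ := hsurj l.head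
  have : P.asIdeal.LiesOver l.head.asIdeal := ⟨congrArg PrimeSpectrum.asIdeal hP.symm⟩
  obtain ⟨L, hlength, -⟩ := Ideal.exists_ltSeries_of_hasGoingUp l P.asIdeal
  exact hlength ▸ Order.LTSeries.length_le_krullDim L

theorem ringKrullDim_le_of_isIntegral (R S : Type*) [CommRing R] [CommRing S] [Algebra R S]
    [Algebra.IsIntegral R S] : ringKrullDim S ≤ ringKrullDim R :=
  Order.krullDim_le_of_strictMono (PrimeSpectrum.comap (algebraMap R S))
    fun P Q hPQ ↦ Ideal.IsIntegral.comap_lt_comap (I := P.asIdeal) (J := Q.asIdeal) hPQ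

theorem ringKrullDim_eq_of_isIntegral (R S : Type*) [CommRing R] [CommRing S] [Algebra R S]
    [Algebra.IsIntegral R S] [FaithfulSMul R S] : ringKrullDim S = ringKrullDim R :=
  (ringKrullDim_le_of_isIntegral R S).antisymm <| ringKrullDim_le_of_hasGoingUp <|
    Algebra.IsIntegral.comap_surjective R S

theorem ringKrullDim_eq_add_card_of_algebraicIndependent {k S ι : Type*} [CommRing k]
    [IsNoetherianRing k] [CommRing S] [Algebra k S] [Finite ι] {x : ι → S}
    (hx : AlgebraicIndependent k x)
    [Algebra.IsIntegral (Algebra.adjoin k (Set.range x)) S] :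
    ringKrullDim S = ringKrullDim k + Nat.card ι := by
  rw [ringKrullDim_eq_of_isIntegral (Algebra.adjoin k (Set.range x)) S,
    ← ringKrullDim_eq_of_ringEquiv hx.aevalEquiv.toRingEquiv,
    MvPolynomial.ringKrullDim_of_isNoetherianRing]

theorem isIntegral_of_adjoin_eq_top {k R S : Type*} [CommSemiring k] [CommRing R] [CommRing S]
    [Algebra k R] [Algebra k S] [Algebra R S] [IsScalarTower k R S] {s : Set S}
    (hs : Algebra.adjoin k s = ⊤) (hint : ∀ x ∈ s, IsIntegral R x) : Algebra.IsIntegral R S := by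
  have hle : Algebra.adjoin k s ≤ (integralClosure R S).restrictScalars k :=
    Algebra.adjoin_le hint
  exact ⟨fun x ↦ hle (hs ▸ Algebra.mem_top)⟩

theorem algebraicIndependent_pow {k A ι : Type*} [CommRing k] [CommRing A] [Algebra k A]
    {x : ι → A} (hx : AlgebraicIndependent k x) {n : ℕ} (hn : 0 < n) :
    AlgebraicIndependent k fun i ↦ x i ^ n := by
  have hcomp : aeval (fun i ↦ x i ^ n) = (aeval x).comp (expand n : _ →ₐ[k] MvPolynomial ι k) := by
    ext i
    simp
  rw [AlgebraicIndependent, hcomp, AlgHom.coe_comp]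
  exact Function.Injective.comp hx (expand_injective hn)

section Veronese

variable (k : Type*) [CommRing k]

/-- The degree-two monomials in four variables, with the squares first: the parametrization of
the cone over the Veronese embedding of `ℙ³`. -/
noncomputable def veroneseMonomial : Fin 10 → MvPolynomial (Fin 4) k :=
  ![X 0 ^ 2, X 1 ^ 2, X 2 ^ 2, X 3 ^ 2,
    X 0 * X 1, X 0 * X 2, X 0 * X 3, X 1 * X 2, X 1 * X 3, X 2 * X 3]

/-- The quadratic equations of the cone over the Veronese embedding of `ℙ³`, in the coordinates
listed by `veroneseMonomial`. -/
def veroneseQuadrics : Set (MvPolynomial (Fin 10) k) :=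
  {X 0 * X 1 - X 4 ^ 2, X 0 * X 2 - X 5 ^ 2, X 0 * X 3 - X 6 ^ 2,
    X 0 * X 7 - X 4 * X 5, X 0 * X 8 - X 4 * X 6, X 0 * X 9 - X 5 * X 6,
    X 1 * X 2 - X 7 ^ 2, X 1 * X 3 - X 8 ^ 2, X 1 * X 5 - X 4 * X 7,
    X 1 * X 6 - X 4 * X 8, X 1 * X 9 - X 7 * X 8, X 2 * X 3 - X 9 ^ 2,
    X 2 * X 4 - X 5 * X 7, X 2 * X 6 - X 5 * X 9, X 2 * X 8 - X 7 * X 9,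
    X 3 * X 4 - X 6 * X 8, X 3 * X 5 - X 6 * X 9, X 3 * X 7 - X 8 * X 9,
    X 4 * X 9 - X 5 * X 8, X 5 * X 8 - X 6 * X 7}

/-- The coordinate ring of the scheme cut out by `veroneseQuadrics`. -/
abbrev VeroneseCone : Type _ := MvPolynomial (Fin 10) k ⧸ Ideal.span (veroneseQuadrics k)

namespace VeroneseCone

/-- The coordinate functions on the cone: the `i`-th one restricts to `veroneseMonomial k i`. -/
noncomputable def coord (i : Fin 10) : VeroneseCone k := Ideal.Quotient.mk _ (X i)

theorem aeval_veroneseMonomial_eq_zero {p : MvPolynomial (Fin 10) k}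
    (hp : p ∈ Ideal.span (veroneseQuadrics k)) : aeval (veroneseMonomial k) p = 0 := by
  have hker : veroneseQuadrics k ⊆ RingHom.ker (aeval (R := k) (veroneseMonomial k)) := by
    intro q hq
    simp only [veroneseQuadrics, Set.mem_insert_iff, Set.mem_singleton_iff] at hq
    rcases hq with rfl | rfl | rfl | rfl | rfl | rfl | rfl | rfl | rfl | rfl | rfl | rfl | rfl |
      rfl | rfl | rfl | rfl | rfl | rfl | rfl <;>
    · simp only [SetLike.mem_coe, RingHom.mem_ker, map_sub, map_mul, map_pow, aeval_X,
        veroneseMonomial, Matrix.cons_val]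
      ring
  exact Ideal.span_le.mpr hker hp

/-- Restriction of functions on the cone along the Veronese parametrization. -/
noncomputable def toMvPolynomial : VeroneseCone k →ₐ[k] MvPolynomial (Fin 4) k :=
  Ideal.Quotient.liftₐ _ (aeval (veroneseMonomial k)) fun _ ↦ aeval_veroneseMonomial_eq_zero k

theorem toMvPolynomial_coord (i : Fin 10) :
    toMvPolynomial k (coord k i) = veroneseMonomial k i :=
  aeval_X _ i

theorem adjoin_range_coord : Algebra.adjoin k (Set.range (coord k)) = ⊤ := by
  have hrange : Set.range (coord k) = Ideal.Quotient.mkₐ k _ '' Set.range X :=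
    Set.range_comp (Ideal.Quotient.mkₐ k _) X
  rw [hrange, ← AlgHom.map_adjoin, adjoin_range_X, Algebra.map_top, AlgHom.range_eq_top]
  exact Ideal.Quotient.mkₐ_surjective k _

/-- The first four coordinates, which restrict to squares of variables along the Veronese
parametrization. -/
noncomputable def squareCoord (a : Fin 4) : VeroneseCone k := coord k (Fin.castAdd 6 a)

theorem algebraicIndependent_squareCoord : AlgebraicIndependent k (squareCoord k) := by
  have hsq : toMvPolynomial k ∘ squareCoord k = fun a ↦ X a ^ 2 := by
    funext a
    rw [Function.comp_apply, squareCoord, toMvPolynomial_coord]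
    fin_cases a <;> rfl
  refine AlgebraicIndependent.of_comp (toMvPolynomial k) ?_
  rw [hsq]
  exact algebraicIndependent_pow (algebraicIndependent_X (Fin 4) k) two_pos

theorem exists_coord_sq_eq (i : Fin 10) :
    ∃ a b, coord k i ^ 2 = squareCoord k a * squareCoord k b := by
  have hrel (a b : Fin 4)
      (h : X (Fin.castAdd 6 a) * X (Fin.castAdd 6 b) - X i ^ 2 ∈ veroneseQuadrics k) :
      coord k i ^ 2 = squareCoord k a * squareCoord k b :=
    ((Ideal.Quotient.mk_eq_mk_iff_sub_mem _ _).mpr (Ideal.subset_span h)).symm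
  fin_cases i
  · exact ⟨0, 0, sq _⟩
  · exact ⟨1, 1, sq _⟩
  · exact ⟨2, 2, sq _⟩
  · exact ⟨3, 3, sq _⟩
  · exact ⟨0, 1, hrel _ _ (by simp [veroneseQuadrics])⟩
  · exact ⟨0, 2, hrel _ _ (by simp [veroneseQuadrics])⟩
  · exact ⟨0, 3, hrel _ _ (by simp [veroneseQuadrics])⟩
  · exact ⟨1, 2, hrel _ _ (by simp [veroneseQuadrics])⟩
  · exact ⟨1, 3, hrel _ _ (by simp [veroneseQuadrics])⟩
  · exact ⟨2, 3, hrel _ _ (by simp [veroneseQuadrics])⟩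

theorem isIntegral_adjoin_squareCoord :
    Algebra.IsIntegral (Algebra.adjoin k (Set.range (squareCoord k))) (VeroneseCone k) := by
  refine isIntegral_of_adjoin_eq_top (adjoin_range_coord k) ?_
  rintro _ ⟨i, rfl⟩
  obtain ⟨a, b, hab⟩ := exists_coord_sq_eq k i
  have hmem : coord k i ^ 2 ∈ Algebra.adjoin k (Set.range (squareCoord k)) :=
    hab ▸ mul_mem (Algebra.subset_adjoin ⟨a, rfl⟩) (Algebra.subset_adjoin ⟨b, rfl⟩)
  exact IsIntegral.of_pow two_pos <|
    isIntegral_algebraMap (x := (⟨_, hmem⟩ : Algebra.adjoin k (Set.range (squareCoord k))))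

end VeroneseCone

theorem krullDim_veronese_cone_P3_general [IsNoetherianRing k] :
    ringKrullDim (MvPolynomial (Fin 10) k ⧸ Ideal.span (veroneseQuadrics k)) =
      ringKrullDim k + 4 := by
  have := VeroneseCone.isIntegral_adjoin_squareCoord k
  simpa using ringKrullDim_eq_add_card_of_algebraicIndependent
    (VeroneseCone.algebraicIndependent_squareCoord k)

end Veronese

/-- the quotient of `ℂ[z₁,…,z₁₀]` (with `zᵢ = X (i-1)`) by the ideal
generated by the twenty listed quadrics has Krull dimension 4. -/
theorem krullDim_veronese_cone_P3 :
    ringKrullDim (MvPolynomial (Fin 10) ℂ ⧸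
      Ideal.span ({X 0 * X 1 - X 4 ^ 2, X 0 * X 2 - X 5 ^ 2, X 0 * X 3 - X 6 ^ 2,
        X 0 * X 7 - X 4 * X 5, X 0 * X 8 - X 4 * X 6, X 0 * X 9 - X 5 * X 6,
        X 1 * X 2 - X 7 ^ 2, X 1 * X 3 - X 8 ^ 2, X 1 * X 5 - X 4 * X 7,
        X 1 * X 6 - X 4 * X 8, X 1 * X 9 - X 7 * X 8, X 2 * X 3 - X 9 ^ 2,
        X 2 * X 4 - X 5 * X 7, X 2 * X 6 - X 5 * X 9, X 2 * X 8 - X 7 * X 9,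
        X 3 * X 4 - X 6 * X 8, X 3 * X 5 - X 6 * X 9, X 3 * X 7 - X 8 * X 9,
        X 4 * X 9 - X 5 * X 8, X 5 * X 8 - X 6 * X 7} :
        Set (MvPolynomial (Fin 10) ℂ))) = 4 := by
  exact (krullDim_veronese_cone_P3_general ℂ).trans (by simp)
end
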